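/- Let Y_n ⊂ ℝ² be a Π_n-poised set and suppose there exist linearly independent polynomials h_0, …, h_{n+1} ∈ Π_{n+1} ∩ I(Y_n) that admit a linear syzygy matrix Σ(x) ∈ Π_1^{(n+1)×(n+2)} of rank n + 1 having one column of the form k(x)·v for some v ∈ ℝ^{n+1} and some nonconstant k ∈ Π_1. Then K = V(k) is a maximal line for Y_n, i.e., #(K ∩ Y_n) = n + 1. -/

import Mathlib

open MvPolynomial

noncomputable section

abbrev Pt : Type := Fin 2 → ℝ
abbrev BPoly : Type := MvPolynomial (Fin 2) ℝ

/-- `Π_n`: the space of bivariate polynomials of total degree at most `n`. -/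
def PiLE (n : ℕ) : Submodule ℝ BPoly := MvPolynomial.restrictTotalDegree (Fin 2) ℝ n

/-- The vanishing ideal `I(Y)` of a set `Y ⊆ ℝ²`. -/
def vIdeal (Y : Set Pt) : Ideal BPoly where
  carrier := {p | ∀ y ∈ Y, eval y p = 0}
  add_mem' := by
    intro a b ha hb y hy
    simp [map_add, ha y hy, hb y hy]
  zero_mem' := by intro y hy; simp
  smul_mem' := by
    intro c a ha y hy
    simp [smul_eq_mul, ha y hy]

/-- `I(Y)` as an `ℝ`-subspace of `Π`. -/
def vSub (Y : Set Pt) : Submodule ℝ BPoly := (vIdeal Y).restrictScalars ℝ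

/-- `Y` is `Π_n`-poised: every interpolation problem on `Y` has a unique solution in `Π_n`. -/
def Poised (n : ℕ) (Y : Finset Pt) : Prop :=
  ∀ f : Pt → ℝ, ∃! p : BPoly, p ∈ PiLE n ∧ ∀ y ∈ Y, eval y p = f y

/-- `Y` is `Π_n`-independent: every interpolation problem on `Y` has a solution in `Π_n`. -/
def PIndep (n : ℕ) (Y : Finset Pt) : Prop :=
  ∀ f : Pt → ℝ, ∃ p ∈ PiLE n, ∀ y ∈ Y, eval y p = f y

/-- `ℓ y` is the fundamental (Lagrange) polynomial of `y ∈ Y` in `Π_n`. -/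
def IsFundamental (n : ℕ) (Y : Finset Pt) (ℓ : Pt → BPoly) : Prop :=
  ∀ y ∈ Y, ℓ y ∈ PiLE n ∧ ∀ y' ∈ Y, eval y' (ℓ y) = if y' = y then 1 else 0

/-- A finite family is an H-basis of the ideal `I`. -/
def IsHBasisFam {ι : Type} [Fintype ι] (I : Ideal BPoly) (h : ι → BPoly) : Prop :=
  (∀ i, h i ∈ I) ∧ ∀ f ∈ I, ∃ g : ι → BPoly,
    (∀ i, (g i).totalDegree ≤ f.totalDegree - (h i).totalDegree) ∧ f = ∑ i, g i * h i

/-- A finite set is an H-basis of the ideal `I`. -/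
def IsHBasisSet (I : Ideal BPoly) (H : Finset BPoly) : Prop :=
  (∀ p ∈ H, p ∈ I) ∧ ∀ f ∈ I, ∃ g : BPoly → BPoly,
    (∀ p ∈ H, (g p).totalDegree ≤ f.totalDegree - p.totalDegree) ∧ f = ∑ p ∈ H, g p * p

/-- `M` is a linear syzygy matrix for the family `h`. -/
def IsLinSyz (n : ℕ) (h : Fin (n + 2) → BPoly)
    (M : Matrix (Fin (n + 1)) (Fin (n + 2)) BPoly) : Prop :=
  (∀ i j, M i j ∈ PiLE 1) ∧ ∀ i, ∑ j, M i j * h j = 0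

/-- The rank of a polynomial matrix over the field of rational functions. -/
def ratRank {a b : ℕ} (M : Matrix (Fin a) (Fin b) BPoly) : ℕ :=
  (M.map (algebraMap BPoly (FractionRing BPoly))).rank


lemma mem_PiLE {n : ℕ} {p : BPoly} : p ∈ PiLE n ↔ p.totalDegree ≤ n :=
  MvPolynomial.mem_restrictTotalDegree _ _ _

lemma poised_zero {n : ℕ} {Y : Finset Pt} (hY : Poised n Y) {p : BPoly}
    (hp : p.totalDegree ≤ n) (h0 : ∀ y ∈ Y, eval y p = 0) : p = 0 := by
  obtain ⟨q, _, hq⟩ := hY (fun _ => 0)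
  rw [hq p ⟨mem_PiLE.2 hp, h0⟩, hq 0 ⟨Submodule.zero_mem _, by simp⟩]

lemma poised_deg {n : ℕ} {Y : Finset Pt} (hY : Poised n Y) {p : BPoly}
    (hp : p ∈ PiLE (n + 1) ⊓ vSub (Y : Set Pt)) (h0 : p ≠ 0) : p.totalDegree = n + 1 := by
  have h1 := mem_PiLE.1 hp.1
  by_contra hne
  exact h0 (poised_zero hY (by omega) (fun y hy => hp.2 y hy))

lemma lead_card {N d : ℕ} (f : Fin N → BPoly) (hf : LinearIndependent ℝ f)
    (hd : ∀ c : Fin N → ℝ, ∑ i, c i • f i ≠ 0 → (∑ i, c i • f i).totalDegree = d) :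
    N ≤ d + 1 := by
  let e : Fin (d + 1) → (Fin 2 →₀ ℕ) :=
    fun a => Finsupp.single 0 (a : ℕ) + Finsupp.single 1 (d - (a : ℕ))
  let L : (Fin N → ℝ) →ₗ[ℝ] (Fin (d + 1) → ℝ) :=
    LinearMap.pi (fun a => (MvPolynomial.lcoeff ℝ (e a)) ∘ₗ (Fintype.linearCombination ℝ f))
  have hL : Function.Injective L := by
    rw [← LinearMap.ker_eq_bot, LinearMap.ker_eq_bot']
    intro c hc
    have hz : ∑ i, c i • f i = 0 := by
      by_contra hne
      have hdeg := hd c hne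
      obtain ⟨m, hm, hmd⟩ := Finset.exists_mem_eq_sup _ (MvPolynomial.support_nonempty.2 hne)
        (fun s : Fin 2 →₀ ℕ => s.sum fun _ e => e)
      have h2 : m 0 + m 1 = d := by
        rw [← hdeg, MvPolynomial.totalDegree, hmd, Finsupp.sum_fintype _ _ (by simp)]
        simp
      have h3 := congrFun hc ⟨m 0, by omega⟩
      have h4 : e ⟨m 0, by omega⟩ = m := by
        ext i
        fin_cases i
        · simp [e]
        · simp [e]; omega
      rw [MvPolynomial.mem_support_iff] at hm
      apply hm
      rw [← h4]
      simpa [L, Fintype.linearCombination_apply, coeff_sum] using h3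
    funext i
    exact Fintype.linearIndependent_iff.1 hf c hz i
  simpa using LinearMap.finrank_le_finrank_of_injective hL

lemma smul_fac {N : ℕ} {h q : Fin N → BPoly} {g : BPoly} (hq : ∀ i, h i = g * q i)
    (c : Fin N → ℝ) : ∑ i, c i • h i = g * ∑ i, c i • q i := by
  simp [Finset.mul_sum, hq]

lemma fac_indep {N : ℕ} {h q : Fin N → BPoly} {g : BPoly} (hq : ∀ i, h i = g * q i)
    (hind : LinearIndependent ℝ h) : LinearIndependent ℝ q := by
  rw [Fintype.linearIndependent_iff] at hind ⊢
  intro c hc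
  apply hind c
  rw [smul_fac hq, hc, mul_zero]

lemma dvd_card {n N : ℕ} {Y : Finset Pt} (hY : Poised n Y) (h q : Fin (N + 1) → BPoly)
    (hmem : ∀ i, h i ∈ PiLE (n + 1) ⊓ vSub (Y : Set Pt))
    (hind : LinearIndependent ℝ h) (g : BPoly) (hq : ∀ i, h i = g * q i) :
    N + g.totalDegree ≤ n + 1 := by
  have h0 : h 0 ≠ 0 := hind.ne_zero 0
  have hg : g ≠ 0 := by rintro rfl; simp [hq] at h0
  have hq0 : q 0 ≠ 0 := by intro h1; simp [hq, h1] at h0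
  have e1 := poised_deg hY (hmem 0) h0
  rw [hq 0, totalDegree_mul_of_isDomain hg hq0] at e1
  have := lead_card (d := n + 1 - g.totalDegree) q (fac_indep hq hind) (by
    intro c hc
    have hm : g * ∑ i, c i • q i ∈ PiLE (n + 1) ⊓ vSub (Y : Set Pt) := by
      rw [← smul_fac hq]
      exact Submodule.sum_mem _ fun i _ => Submodule.smul_mem _ _ (hmem i)
    have e2 := poised_deg hY hm (mul_ne_zero hg hc)
    rw [totalDegree_mul_of_isDomain hg hc] at e2
    omega)
  omega

lemma det_deg {n : ℕ} (A : Matrix (Fin n) (Fin n) BPoly)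
    (hA : ∀ i j, (A i j).totalDegree ≤ 1) : A.det.totalDegree ≤ n := by
  rw [Matrix.det_apply]
  apply totalDegree_finsetSum_le
  intro σ _
  refine (totalDegree_smul_le _ _).trans ((totalDegree_finsetProd _ _).trans ?_)
  refine (Finset.sum_le_sum (fun i _ => hA _ _)).trans ?_
  simp

lemma adj_deg {n : ℕ} (A : Matrix (Fin (n + 1)) (Fin (n + 1)) BPoly)
    (hA : ∀ i j, (A i j).totalDegree ≤ 1) (i j) : (A.adjugate i j).totalDegree ≤ n := by
  rw [Matrix.adjugate_fin_succ_eq_det_submatrix]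
  have h1 : ((-1 : BPoly) ^ (j + i : ℕ)).totalDegree = 0 := by
    rcases neg_one_pow_eq_or BPoly (j + i : ℕ) with h | h <;> simp [h]
  refine (totalDegree_mul _ _).trans ?_
  rw [h1, zero_add]
  exact det_deg _ fun _ _ => hA _ _

lemma rank_rows {a b : ℕ} (M : Matrix (Fin a) (Fin b) BPoly) (hM : ratRank M = a)
    (w : Fin a → BPoly) (hw : Matrix.vecMul w M = 0) : w = 0 := by
  have h1 : LinearIndependent (FractionRing BPoly)
      (M.map (algebraMap BPoly (FractionRing BPoly))).row := by
    rw [linearIndependent_iff_card_eq_finrank_span]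
    rw [Fintype.card_fin, Set.finrank, ← Matrix.rank_eq_finrank_span_row]
    exact hM.symm
  rw [← Matrix.vecMul_injective_iff] at h1
  have h2 : Matrix.vecMul (fun i => algebraMap BPoly (FractionRing BPoly) (w i))
      (M.map (algebraMap BPoly (FractionRing BPoly))) = 0 := by
    funext l
    have := congrArg (algebraMap BPoly (FractionRing BPoly)) (congrFun hw l)
    simpa [Matrix.vecMul, dotProduct] using this
  have h3 := h1 (h2.trans (Matrix.zero_vecMul _).symm)
  funext i
  have h4 := congrFun h3 i
  simpa using h4

lemma linear_form (k : BPoly) (hk : k.totalDegree = 1) :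
    ∃ a b c : ℝ, (a ≠ 0 ∨ b ≠ 0) ∧ ∀ x : Pt, eval x k = a * x 0 + b * x 1 + c := by
  have key : k = C (coeff (Finsupp.single 0 1) k) * X 0 + C (coeff (Finsupp.single 1 1) k) * X 1
      + C (coeff 0 k) := by
    have h10 : (Finsupp.single (1 : Fin 2) 1 : Fin 2 →₀ ℕ) ≠ Finsupp.single 0 1 := by
      intro h; have := DFunLike.congr_fun h 0; simp at this
    ext m
    simp only [coeff_add, coeff_C_mul, coeff_X, coeff_C]
    by_cases hm : m 0 + m 1 ≤ 1
    · have : m = 0 ∨ m = Finsupp.single 0 1 ∨ m = Finsupp.single 1 1 := by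
        have : (m 0 = 0 ∧ m 1 = 0) ∨ (m 0 = 1 ∧ m 1 = 0) ∨ (m 0 = 0 ∧ m 1 = 1) := by omega
        rcases this with h | h | h
        · left; ext i; fin_cases i <;> simp [h]
        · right; left; ext i; fin_cases i <;> simp [h]
        · right; right; ext i; fin_cases i <;> simp [h]
      rcases this with rfl | rfl | rfl
      · simp
      · simp [h10, eq_comm]
      · simp [h10.symm, eq_comm]
    · have h1 : coeff m k = 0 := by
        apply coeff_eq_zero_of_totalDegree_lt
        rw [hk]
        have : ∑ i ∈ m.support, m i = m 0 + m 1 := by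
          have := Finsupp.sum_fintype m (fun _ e => e) (by simp)
          rw [Finsupp.sum] at this
          simpa using this
        omega
      have h2 : Finsupp.single 0 1 ≠ m := by rintro rfl; simp at hm
      have h3 : Finsupp.single 1 1 ≠ m := by rintro rfl; simp at hm
      have h4 : 0 ≠ m := by rintro rfl; simp at hm
      simp [h1, h2, h3, h4]
  refine ⟨coeff (Finsupp.single 0 1) k, coeff (Finsupp.single 1 1) k, coeff 0 k, ?_,
    fun x => by conv_lhs => rw [key]
                simp⟩
  · by_contra! hcon
    have h1 := hcon.1
    have h2 := hcon.2
    rw [h1, h2] at key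
    rw [key] at hk
    simp at hk

lemma line_card {n : ℕ} {Y : Finset Pt} (hY : Poised n Y) (k : BPoly) (hk : k.totalDegree = 1)
    (S : Finset Pt) (hSY : S ⊆ Y) (hS : ∀ y ∈ S, eval y k = 0) : S.card ≤ n + 1 := by
  obtain ⟨a, b, c, hab, hev⟩ := linear_form k hk
  rcases S.eq_empty_or_nonempty with rfl | ⟨y0, hy0⟩
  · simp
  have hpos : a * a + b * b ≠ 0 := by
    intro h
    rcases hab with h1 | h1 <;> apply h1 <;> nlinarith [mul_self_nonneg a, mul_self_nonneg b]
  obtain ⟨p, ⟨hp, hpv⟩, -⟩ := hY (fun y => if y = y0 then 1 else 0)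
  let F : Fin 2 → Polynomial ℝ := ![Polynomial.C b * Polynomial.X + Polynomial.C (y0 0),
    Polynomial.C (-a) * Polynomial.X + Polynomial.C (y0 1)]
  let q : Polynomial ℝ := aeval F p
  have hqd : q.natDegree ≤ n := by
    have := aeval_natDegree_le (m := n) (n := 1) p (mem_PiLE.1 hp) F (by
      intro i; fin_cases i
      · exact Polynomial.natDegree_linear_le
      · exact Polynomial.natDegree_linear_le)
    simpa using this
  have hqe : ∀ t, q.eval t = eval ![b * t + y0 0, -a * t + y0 1] p := by
    intro t
    have : (Polynomial.evalRingHom t).comp (aeval F : BPoly →ₐ[ℝ] _).toRingHom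
        = eval ![b * t + y0 0, -a * t + y0 1] := by
      apply MvPolynomial.ringHom_ext
      · intro r; simp
      · intro i; fin_cases i <;> simp [F]
    exact RingHom.congr_fun this p
  let T : Pt → ℝ := fun y => (b * (y 0 - y0 0) - a * (y 1 - y0 1)) / (a * a + b * b)
  have hT : ∀ y ∈ S, ![b * T y + y0 0, -a * T y + y0 1] = y := by
    intro y hy
    have e1 := hS y hy
    have e0 := hS y0 hy0
    rw [hev] at e1 e0
    have e2 : a * (y 0 - y0 0) + b * (y 1 - y0 1) = 0 := by linarith
    funext i
    fin_cases i
    · simp only [T]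
      simp only [Fin.zero_eta, Matrix.cons_val_zero]
      rw [mul_div_assoc', div_add' _ _ _ hpos, div_eq_iff hpos]
      linear_combination (-a) * e2
    · simp only [T]
      simp only [Fin.mk_one, Matrix.cons_val_one, Matrix.cons_val_zero]
      rw [mul_div_assoc', div_add' _ _ _ hpos, div_eq_iff hpos]
      linear_combination (-b) * e2
  have hq0 : q ≠ 0 := by
    intro h
    have h1 := hqe (T y0)
    rw [hT y0 hy0, hpv y0 (hSY hy0), h] at h1
    simp at h1
  have hsub : (S.erase y0).image T ⊆ q.roots.toFinset := by
    intro t ht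
    obtain ⟨y, hy, rfl⟩ := Finset.mem_image.1 ht
    obtain ⟨hy1, hy2⟩ := Finset.mem_erase.1 hy
    rw [Multiset.mem_toFinset, Polynomial.mem_roots hq0, Polynomial.IsRoot, hqe, hT y hy2,
      hpv y (hSY hy2), if_neg hy1]
  have hinj : Set.InjOn T (S.erase y0 : Finset Pt) := by
    intro y hy z hz hyz
    rw [← hT y (Finset.mem_of_mem_erase hy), ← hT z (Finset.mem_of_mem_erase hz), hyz]
  have h1 := Finset.card_le_card hsub
  rw [Finset.card_image_of_injOn hinj, Finset.card_erase_of_mem hy0] at h1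
  have h2 := q.roots.toFinset_card_le
  have h3 := q.card_roots'
  omega

lemma gcd_part {N d : ℕ} (f m : Fin (N + 1) → BPoly) (hf : ∀ i, f i ≠ 0)
    (hm : ∀ i, m i ≠ 0) (hmd : ∀ i, (m i).totalDegree ≤ d)
    (hfm : ∀ i l, m i * f l = m l * f i) :
    ∃ (g : BPoly) (q : Fin (N + 1) → BPoly), (∀ i, f i = g * q i) ∧
      ∀ i, (q i).totalDegree ≤ d := by
  classical
  let _ : StrongNormalizationMonoid BPoly :=
    UniqueFactorizationMonoid.strongNormalizationMonoid
  let _ : NormalizedGCDMonoid BPoly := UniqueFactorizationMonoid.toNormalizedGCDMonoid BPoly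
  obtain ⟨q, hq, hq1⟩ := Finset.extract_gcd (s := Finset.univ) f ⟨0, Finset.mem_univ _⟩
  refine ⟨Finset.univ.gcd f, q, fun i => hq i (Finset.mem_univ _), fun i => ?_⟩
  have hg : Finset.univ.gcd f ≠ 0 := by
    intro h; apply hf 0; rw [hq 0 (Finset.mem_univ _), h, zero_mul]
  have h1 : ∀ l, q i ∣ m i * q l := by
    intro l
    refine ⟨m l, ?_⟩
    apply mul_left_cancel₀ hg
    have := hfm i l
    rw [hq i (Finset.mem_univ _), hq l (Finset.mem_univ _)] at this
    linear_combination this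
  have h2 : q i ∣ Finset.univ.gcd (fun l => m i * q l) := Finset.dvd_gcd fun l _ => h1 l
  have h3 : q i ∣ m i := by
    have := h2.trans (Finset.gcd_mul_left' (s := Finset.univ) (f := q) (m i)).dvd
    rwa [hq1, mul_one] at this
  obtain ⟨r, hr⟩ := h3
  have := hmd i
  have hne := hm i
  rw [hr] at hne this
  rw [totalDegree_mul_of_isDomain (left_ne_zero_of_mul hne) (right_ne_zero_of_mul hne)] at this
  omega

/-- If a `Π_n`-poised set `Y_n` admits linearly independent
`h_0, …, h_{n+1} ∈ Π_{n+1} ∩ I(Y_n)` with a rank-`(n+1)` linear syzygy matrix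
having a column of the form `k(x)·v` with `k` nonconstant linear, then
`K = V(k)` is a maximal line for `Y_n`: `#(K ∩ Y_n) = n+1`. -/
theorem stmt15 (n : ℕ) (Y : Finset Pt) (hY : Poised n Y)
    (h : Fin (n + 2) → BPoly)
    (hmem : ∀ i, h i ∈ PiLE (n + 1) ⊓ vSub (Y : Set Pt))
    (hind : LinearIndependent ℝ h)
    (M : Matrix (Fin (n + 1)) (Fin (n + 2)) BPoly)
    (hM : IsLinSyz n h M) (hrk : ratRank M = n + 1)
    (k : BPoly) (hk : k.totalDegree = 1)
    (v : Fin (n + 1) → ℝ) (j : Fin (n + 2))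
    (hcol : ∀ i, M i j = C (v i) * k) :
    ((Y : Set Pt) ∩ {x | eval x k = 0}).ncard = n + 1 := by
  classical
  have hsyz := hM.2
  simp only [Fin.sum_univ_succAbove _ j, hcol] at hsyz
  have hh0 : ∀ i, h i ≠ 0 := fun i => hind.ne_zero i
  have hk0 : k ≠ 0 := by rintro rfl; simp at hk
  let A : Matrix (Fin (n + 1)) (Fin (n + 1)) BPoly := fun i l => M i (j.succAbove l)
  let f : Fin (n + 1) → BPoly := fun l => h (j.succAbove l)
  let V : Fin (n + 1) → BPoly := fun i => C (v i)
  have hAf : A.mulVec f = (-(k * h j)) • V := by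
    funext i
    have := hsyz i
    simp only [Matrix.mulVec, dotProduct, A, f, V, Pi.smul_apply, smul_eq_mul]
    linear_combination this
  have hdet : A.det ≠ 0 := by
    intro hd
    obtain ⟨w, hw0, hw⟩ := Matrix.exists_vecMul_eq_zero_iff.2 hd
    apply hw0
    apply rank_rows M hrk
    have h1 : dotProduct w (A.mulVec f) = 0 := by
      rw [Matrix.dotProduct_mulVec, hw, zero_dotProduct]
    rw [hAf, dotProduct_smul, smul_eq_mul] at h1
    have h2 : dotProduct w V = 0 :=
      (mul_eq_zero.1 h1).resolve_left (neg_ne_zero.2 (mul_ne_zero hk0 (hh0 j)))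
    funext l
    rcases Fin.eq_self_or_eq_succAbove j l with rfl | ⟨l', rfl⟩
    · simp only [Matrix.vecMul, dotProduct, hcol, Pi.zero_apply]
      simp only [← mul_assoc, ← Finset.sum_mul]
      simp only [dotProduct, V] at h2
      rw [h2, zero_mul]
    · exact congrFun hw l'
  let m : Fin (n + 1) → BPoly := A.adjugate.mulVec V
  have hmf : ∀ i, A.det * f i = (-(k * h j)) * m i := by
    intro i
    have h1 := congrArg (A.adjugate.mulVec) hAf
    rw [Matrix.mulVec_mulVec, Matrix.adjugate_mul, Matrix.smul_mulVec, Matrix.one_mulVec,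
      Matrix.mulVec_smul] at h1
    exact congrFun h1 i
  have hf0 : ∀ i, f i ≠ 0 := fun i => hh0 _
  have hm0 : ∀ i, m i ≠ 0 := by
    intro i hi
    have := hmf i
    rw [hi, mul_zero] at this
    exact mul_ne_zero hdet (hf0 i) this
  have hE : -(k * h j) ≠ 0 := neg_ne_zero.2 (mul_ne_zero hk0 (hh0 j))
  have hmd : ∀ i, (m i).totalDegree ≤ n := by
    intro i
    apply totalDegree_finsetSum_le
    intro l _
    refine (totalDegree_mul _ _).trans ?_
    have h1 := adj_deg A (fun i l => mem_PiLE.1 (hM.1 _ _)) i l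
    have h2 : (V l).totalDegree = 0 := totalDegree_C _
    rw [h2, add_zero]
    exact h1
  obtain ⟨g, q, hq, hqd⟩ := gcd_part f m hf0 hm0 hmd (by
    intro i l
    apply mul_left_cancel₀ hE
    linear_combination (f i) * hmf l - (f l) * hmf i)
  have hfmem : ∀ i, f i ∈ PiLE (n + 1) ⊓ vSub (Y : Set Pt) := fun i => hmem _
  have hfind : LinearIndependent ℝ f :=
    hind.comp _ (Fin.succAbove_right_injective)
  have hg0 : g ≠ 0 := by intro h0; apply hf0 0; rw [hq, h0, zero_mul]
  have hq0 : q 0 ≠ 0 := by intro h0; apply hf0 0; rw [hq, h0, mul_zero]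
  have hgd : g.totalDegree = 1 := by
    have h1 := dvd_card hY f q hfmem hfind g hq
    have h2 := poised_deg hY (hfmem 0) (hf0 0)
    rw [hq, totalDegree_mul_of_isDomain hg0 hq0] at h2
    have := hqd 0
    omega
  have hgp : Prime g := by
    rw [← UniqueFactorizationMonoid.irreducible_iff_prime]
    apply irreducible_of_totalDegree_eq_one hgd
    intro x hx
    rw [isUnit_iff_ne_zero]
    rintro rfl
    apply hg0
    ext i
    simpa using hx i
  have hV : ∃ i, v i ≠ 0 := by
    by_contra! hv
    apply hm0 0
    simp [m, Matrix.mulVec, dotProduct, V, hv]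
  obtain ⟨i0, hi0⟩ := hV
  have hgk : g ∣ k := by
    have h1 : g ∣ C (v i0) * (k * h j) := by
      refine ⟨-∑ l, M i0 (j.succAbove l) * q l, ?_⟩
      have := hsyz i0
      have h2 : ∑ l, M i0 (j.succAbove l) * h (j.succAbove l)
          = g * ∑ l, M i0 (j.succAbove l) * q l := by
        rw [Finset.mul_sum]
        refine Finset.sum_congr rfl fun l _ => ?_
        have := hq l
        simp only [f] at this
        rw [this]; ring
      rw [h2] at this
      linear_combination this
    have hu : ¬ g ∣ C (v i0) := fun hd =>
      hgp.not_isUnit (isUnit_of_dvd_unit hd ((isUnit_iff_ne_zero.2 hi0).map C))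
    rcases hgp.dvd_or_dvd ((hgp.dvd_or_dvd h1).resolve_left hu) with h2 | h2
    · exact h2
    · exfalso
      have hall : ∀ l, g ∣ h l := by
        intro l
        rcases Fin.eq_self_or_eq_succAbove j l with rfl | ⟨l', rfl⟩
        · exact h2
        · exact ⟨q l', hq l'⟩
      choose q' hq' using hall
      have := dvd_card hY h q' hmem hind g hq'
      omega
  obtain ⟨r, hr⟩ := hgk
  have hr0 : r ≠ 0 := by rintro rfl; apply hk0; rw [hr, mul_zero]
  have hrd : r.totalDegree = 0 := by
    have := hk
    rw [hr, totalDegree_mul_of_isDomain hg0 hr0] at this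
    omega
  rw [totalDegree_eq_zero_iff_eq_C] at hrd
  let S : Finset Pt := Y.filter (fun y => eval y k = 0)
  have hSeq : ((Y : Set Pt) ∩ {x | eval x k = 0}) = (S : Set Pt) := by
    ext x; simp [S]
  rw [hSeq, Set.ncard_coe_finset]
  apply le_antisymm
  · exact line_card hY k hk S (Finset.filter_subset _ _) (fun y hy => (Finset.mem_filter.1 hy).2)
  · let L : (Fin (n + 1) → ℝ) →ₗ[ℝ] (S → ℝ) :=
      LinearMap.pi (fun s => (MvPolynomial.aeval (s : Pt) : BPoly →ₐ[ℝ] ℝ).toLinearMap ∘ₗ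
        (Fintype.linearCombination ℝ q))
    have hqind := fac_indep hq hfind
    have hL : Function.Injective L := by
      rw [← LinearMap.ker_eq_bot, LinearMap.ker_eq_bot']
      intro c hc
      have hz : ∑ i, c i • q i = 0 := by
        apply poised_zero hY
        · exact totalDegree_finsetSum_le fun i _ => (totalDegree_smul_le _ _).trans (hqd i)
        · intro y hy
          by_cases hyk : eval y k = 0
          · have := congrFun hc ⟨y, Finset.mem_filter.2 ⟨hy, hyk⟩⟩
            simpa [L, Fintype.linearCombination_apply, MvPolynomial.aeval_eq_eval] using this
          · have hgy : eval y g ≠ 0 := by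
              intro h0; apply hyk; rw [hr, map_mul, h0, zero_mul]
            rw [map_sum]
            refine Finset.sum_eq_zero fun i _ => ?_
            have h1 : eval y (f i) = 0 := (hfmem i).2 y hy
            rw [hq, map_mul] at h1
            rw [smul_eval, (mul_eq_zero.1 h1).resolve_left hgy, mul_zero]
      funext i
      exact Fintype.linearIndependent_iff.1 hqind c hz i
    simpa using LinearMap.finrank_le_finrank_of_injective hL
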